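/- Let P(λ) = ∑_{k=0}^d λ^k P_k be an n×n matrix polynomial over a field F with even degree d = 2t (t ≥ 2) and invertible leading coefficient P_d, and set Q(λ) := ∑_{k=0}^{d−1} λ^k P_k. Let λB+A be a pencil of size (t+1)n×(t+1)n partitioned as [[M_{11}(λ), M_{12}(λ)],[M_{21}(λ), M_{22}(λ)]] with M_{11} of size n×n, M_{12} of size n×tn, M_{21} of size tn×n, M_{22} of size tn×tn. If M_{11}(λ) = −P_d, M_{12}(λ)(Λ_{t−1}(λ)⊗I_n) = λ^t P_d, (Λ_{t−1}(λ)^T⊗I_n)M_{21}(λ) = λ^t P_d, and (Λ_{t−1}(λ)^T⊗I_n)M_{22}(λ)(Λ_{t−1}(λ)⊗I_n) = Q(λ), then for each σ ∈ {1,−1} the modified block Kronecker pencil built from λB+A is a strong linearization of P(λ) regarded as grade d. -/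

import Mathlib

open Polynomial Matrix
open scoped Kronecker

noncomputable section

/-- Entrywise inclusion of a constant matrix into polynomial matrices. -/
def matC {F : Type} [Field F] {m l : Type*} (M : Matrix m l F) : Matrix m l (Polynomial F) :=
  M.map fun a => (C a : Polynomial F)

/-- The pencil `λ ↦ A + λ B`, represented as a matrix over `F[λ]`. -/
def pencil {F : Type} [Field F] {m l : Type*} (A B : Matrix m l F) :
    Matrix m l (Polynomial F) :=
  matC A + (X : Polynomial F) • matC B

/-- Grade-`g` reversal `rev_g`, applied entrywise. -/
def revMat {F : Type} [Field F] {m l : Type*} (g : ℕ) (M : Matrix m l (Polynomial F)) :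
    Matrix m l (Polynomial F) :=
  M.map fun q => q.reflect g

/-- Entrywise evaluation of a polynomial matrix at a point. -/
def evalMat {F : Type} [Field F] {m l : Type*} (a : F) (M : Matrix m l (Polynomial F)) :
    Matrix m l F :=
  M.map fun q => q.eval a

/-- The matrix polynomial `P(λ) = ∑_{k=0}^d λ^k P_k` built from its coefficients. -/
def polyOfCoeffs {F : Type} [Field F] {n : ℕ} (d : ℕ) (Pc : ℕ → Matrix (Fin n) (Fin n) F) :
    Matrix (Fin n) (Fin n) (Polynomial F) :=
  ∑ k ∈ Finset.range (d + 1), (X : Polynomial F) ^ k • matC (Pc k)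

/-- The `(i,j)` block of a block-partitioned matrix. -/
def blk {α p q n m : Type*} (A : Matrix (p × n) (q × m) α) (i : p) (j : q) :
    Matrix n m α :=
  Matrix.of fun r c => A (i, r) (j, c)

/-- `Λ_s(λ) ⊗ I_n`, an `(s+1)n × n` polynomial matrix whose `i`-th block is `λ^{s-i} I_n`. -/
def Lam (F : Type) [Field F] (s n : ℕ) :
    Matrix (Fin (s+1) × Fin n) (Fin n) (Polynomial F) :=
  Matrix.of fun p c => if p.2 = c then (X : Polynomial F) ^ (s - (p.1 : ℕ)) else 0

/-- The pencil `L_s(λ) ∈ F[λ]^{s×(s+1)}` with `-1` on the diagonal and `λ` on the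
superdiagonal. -/
def Lpen (F : Type) [Field F] (s : ℕ) : Matrix (Fin s) (Fin (s+1)) (Polynomial F) :=
  Matrix.of fun i j =>
    if (j : ℕ) = (i : ℕ) then -1 else if (j : ℕ) = (i : ℕ) + 1 then X else 0

/-- The block Kronecker pencil `[[λB+A, L_s(λ)ᵀ⊗I_n],[σ L_s(λ)⊗I_n, 0]]` associated with a
pencil `M = λB+A` of size `(s+1)n × (s+1)n`. -/
def blockKron (F : Type) [Field F] (s n : ℕ) (σ : F)
    (M : Matrix (Fin (s+1) × Fin n) (Fin (s+1) × Fin n) (Polynomial F)) :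
    Matrix ((Fin (s+1) × Fin n) ⊕ (Fin s × Fin n)) ((Fin (s+1) × Fin n) ⊕ (Fin s × Fin n))
      (Polynomial F) :=
  Matrix.fromBlocks M (Lpen F s ⊗ₖ (1 : Matrix (Fin n) (Fin n) (Polynomial F)))ᵀ
    (σ • (Lpen F s ⊗ₖ (1 : Matrix (Fin n) (Fin n) (Polynomial F)))) 0

/-- `L` is a linearization of `P`: there are unimodular `U`, `V` with
`U L V = diag(I_m, P)` (up to the fixed identification of index sets). -/
def IsLinearization {F : Type} [Field F] (m : ℕ) {ι ρ : Type*} [Fintype ι] [DecidableEq ι]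
    [Fintype ρ] [DecidableEq ρ] (L : Matrix ι ι (Polynomial F))
    (P : Matrix ρ ρ (Polynomial F)) : Prop :=
  ∃ (e : (Fin m ⊕ ρ) ≃ ι) (U V : Matrix ι ι (Polynomial F)),
    IsUnit U.det ∧ IsUnit V.det ∧
      U * L * V =
        (Matrix.fromBlocks (1 : Matrix (Fin m) (Fin m) (Polynomial F)) 0 0 P).submatrix
          e.symm e.symm

/-- The block conditions `∑_{i+j=d+2-k} B_{ij} + ∑_{i+j=d+1-k} A_{ij} = P_k` for
`k = 0,…,d` (blocks are indexed here `0`-based, so `i+j` `1`-based is `i+j+2` `0`-based). -/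
def blockConds {F : Type} [Field F] {s n : ℕ} (d : ℕ) (Pc : ℕ → Matrix (Fin n) (Fin n) F)
    (A B : Matrix (Fin (s+1) × Fin n) (Fin (s+1) × Fin n) F) : Prop :=
  ∀ k, k ≤ d →
    (∑ p ∈ Finset.univ.filter
        (fun p : Fin (s+1) × Fin (s+1) => (p.1 : ℕ) + (p.2 : ℕ) + 2 + k = d + 2),
        blk B p.1 p.2) +
      (∑ p ∈ Finset.univ.filter
        (fun p : Fin (s+1) × Fin (s+1) => (p.1 : ℕ) + (p.2 : ℕ) + 2 + k = d + 1),
        blk A p.1 p.2) = Pc k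

/-- `L̂_t(λ) ⊗ I_n` (with `t = u+1`): first block column zero, remaining block columns
`L_{t-1}(λ) ⊗ I_n`; the column index is split as `Fin n ⊕ (Fin t × Fin n)`. -/
def LhatB (F : Type) [Field F] (u n : ℕ) :
    Matrix (Fin u × Fin n) (Fin n ⊕ Fin (u+1) × Fin n) (Polynomial F) :=
  Matrix.of fun p q =>
    match q with
    | Sum.inl _ => 0
    | Sum.inr c => (Lpen F u ⊗ₖ (1 : Matrix (Fin n) (Fin n) (Polynomial F))) p c

/-- The modified block Kronecker pencil `[[λB+A, L̂_t(λ)ᵀ⊗I_n],[σ L̂_t(λ)⊗I_n, 0]]`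
(with `t = u+1`). -/
def modBK (F : Type) [Field F] (u n : ℕ) (σ : F)
    (M : Matrix (Fin n ⊕ Fin (u+1) × Fin n) (Fin n ⊕ Fin (u+1) × Fin n) (Polynomial F)) :
    Matrix ((Fin n ⊕ Fin (u+1) × Fin n) ⊕ Fin u × Fin n)
      ((Fin n ⊕ Fin (u+1) × Fin n) ⊕ Fin u × Fin n) (Polynomial F) :=
  Matrix.fromBlocks M (LhatB F u n)ᵀ (σ • LhatB F u n) 0

/-- `Λ̂_t(λ) ⊗ I_n` (with `t = u+1`): the `(t+1)n × 2n` polynomial matrix whose transpose has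
block rows `(I_n, 0, …, 0)` and `(0, λ^{t-1}I_n, …, λ I_n, I_n)`. -/
def LamHatB (F : Type) [Field F] (u n : ℕ) :
    Matrix (Fin n ⊕ Fin (u+1) × Fin n) (Fin 2 × Fin n) (Polynomial F) :=
  Matrix.of fun q c =>
    match q with
    | Sum.inl r => if c.1 = 0 ∧ c.2 = r then 1 else 0
    | Sum.inr p => if c.1 = 1 ∧ c.2 = p.2 then (X : Polynomial F) ^ (u - (p.1 : ℕ)) else 0

/-- `Λ̃_t(λ) ⊗ I_n` (with `t = u+1`): the `(t+1)n × 2n` polynomial matrix whose transpose has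
block rows `(I_n, 0, …, 0)` and `(0, I_n, λ I_n, …, λ^{t-1} I_n)`. -/
def LamTildeB (F : Type) [Field F] (u n : ℕ) :
    Matrix (Fin n ⊕ Fin (u+1) × Fin n) (Fin 2 × Fin n) (Polynomial F) :=
  Matrix.of fun q c =>
    match q with
    | Sum.inl r => if c.1 = 0 ∧ c.2 = r then 1 else 0
    | Sum.inr p => if c.1 = 1 ∧ c.2 = p.2 then (X : Polynomial F) ^ (p.1 : ℕ) else 0

/-- A `2n × 2n` matrix assembled from four `n × n` blocks, indexed by `Fin 2 × Fin n`. -/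
def twoBlock {α : Type*} {n : ℕ} (W₁₁ W₁₂ W₂₁ W₂₂ : Matrix (Fin n) (Fin n) α) :
    Matrix (Fin 2 × Fin n) (Fin 2 × Fin n) α :=
  Matrix.of fun p q =>
    if p.1 = 0 then (if q.1 = 0 then W₁₁ p.2 q.2 else W₁₂ p.2 q.2)
    else (if q.1 = 0 then W₂₁ p.2 q.2 else W₂₂ p.2 q.2)

/-- `Λ_t(λ) ⊗ I_n` (with `t = u+1`), over the split row index `Fin n ⊕ (Fin t × Fin n)`:
block entries `λ^t I_n, λ^{t-1} I_n, …, λ I_n, I_n`. -/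
def LamFullB (F : Type) [Field F] (u n : ℕ) :
    Matrix (Fin n ⊕ Fin (u+1) × Fin n) (Fin n) (Polynomial F) :=
  Matrix.of fun q c =>
    match q with
    | Sum.inl r => if r = c then (X : Polynomial F) ^ (u + 1) else 0
    | Sum.inr p => if p.2 = c then (X : Polynomial F) ^ (u - (p.1 : ℕ)) else 0

/-- `N̂_t(λ) = Ĥ_t(λ) ⊗ I_n` (with `t = u+1`): `Ĥ_t ∈ F[λ]^{(t-1)×(t+1)}` has `(i,j)` entry
`λ^{i+1-j}` if `2 ≤ j ≤ i+1` and `0` otherwise. -/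
def NhatB (F : Type) [Field F] (u n : ℕ) :
    Matrix (Fin u × Fin n) (Fin n ⊕ Fin (u+1) × Fin n) (Polynomial F) :=
  Matrix.of fun p q =>
    match q with
    | Sum.inl _ => 0
    | Sum.inr c =>
        if (c.1 : ℕ) ≤ (p.1 : ℕ) ∧ p.2 = c.2 then
          (X : Polynomial F) ^ ((p.1 : ℕ) - (c.1 : ℕ)) else 0

end


section helpers

set_option linter.unusedSimpArgs false

variable {R : Type*} [CommRing R]

/-- Unimodular equivalence with possibly different index types. -/
def UEq {ι κ : Type*} [Fintype ι] [DecidableEq ι] [Fintype κ] [DecidableEq κ]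
    (S : Matrix ι ι R) (T : Matrix κ κ R) : Prop :=
  ∃ (U : Matrix κ ι R) (U' : Matrix ι κ R) (V : Matrix ι κ R) (V' : Matrix κ ι R),
    U * U' = 1 ∧ V' * V = 1 ∧ U * S * V = T

theorem UEq.trans {ι κ μ : Type*} [Fintype ι] [DecidableEq ι] [Fintype κ] [DecidableEq κ]
    [Fintype μ] [DecidableEq μ]
    {S : Matrix ι ι R} {T : Matrix κ κ R} {W : Matrix μ μ R} (h1 : UEq S T) (h2 : UEq T W) :
    UEq S W := by
  obtain ⟨U, U', V, V', hU, hV, h⟩ := h1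
  obtain ⟨Y, Y', Z, Z', hY, hZ, h'⟩ := h2
  refine ⟨Y * U, U' * Y', V * Z, Z' * V', ?_, ?_, ?_⟩
  · calc Y * U * (U' * Y') = Y * (U * U') * Y' := by simp only [Matrix.mul_assoc]
      _ = 1 := by rw [hU, Matrix.mul_one, hY]
  · calc Z' * V' * (V * Z) = Z' * (V' * V) * Z := by simp only [Matrix.mul_assoc]
      _ = 1 := by rw [hV, Matrix.mul_one, hZ]
  · rw [← h', ← h]; simp only [Matrix.mul_assoc]

theorem UEq.diag {ι κ μ : Type*} [Fintype ι] [DecidableEq ι] [Fintype κ] [DecidableEq κ]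
    [Fintype μ] [DecidableEq μ]
    {S : Matrix ι ι R} {T : Matrix κ κ R} (h1 : UEq S T) :
    UEq (fromBlocks (1 : Matrix μ μ R) 0 0 S) (fromBlocks (1 : Matrix μ μ R) 0 0 T) := by
  obtain ⟨U, U', V, V', hU, hV, h⟩ := h1
  refine ⟨fromBlocks 1 0 0 U, fromBlocks 1 0 0 U', fromBlocks 1 0 0 V, fromBlocks 1 0 0 V', ?_, ?_, ?_⟩
  · simp [fromBlocks_multiply, hU]
  · simp [fromBlocks_multiply, hV]
  · simp [fromBlocks_multiply, h]

theorem sub_mul_sub {α β γ δ ε : Type*} [Fintype β] (f : δ → α) (g : ε → γ)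
    (S : Matrix α β R) (T : Matrix β γ R) :
    S.submatrix f id * T.submatrix id g = (S * T).submatrix f g := by
  ext i j; simp [Matrix.mul_apply]

theorem UEq.assoc {κ μ ρ : Type*} [Fintype κ] [DecidableEq κ]
    [Fintype μ] [DecidableEq μ] [Fintype ρ] [DecidableEq ρ] (P : Matrix ρ ρ R) :
    UEq (fromBlocks (1 : Matrix κ κ R) 0 0 (fromBlocks (1 : Matrix μ μ R) 0 0 P))
      (fromBlocks (1 : Matrix (κ ⊕ μ) (κ ⊕ μ) R) 0 0 P) := by
  let e := Equiv.sumAssoc κ μ ρ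
  refine ⟨(1 : Matrix _ _ R).submatrix e id, (1 : Matrix _ _ R).submatrix id e,
    (1 : Matrix _ _ R).submatrix id e, (1 : Matrix _ _ R).submatrix e id, ?_, ?_, ?_⟩
  · rw [sub_mul_sub]; simp
  · rw [sub_mul_sub]; simp
  · ext i j
    rw [Matrix.mul_apply]
    simp only [Matrix.mul_apply, submatrix_apply, id, Matrix.one_apply, ite_mul, mul_ite, one_mul,
      mul_one, zero_mul, mul_zero, Finset.sum_ite_eq, Finset.sum_ite_eq', Finset.mem_univ, if_true]
    rcases i with (i | i) | i <;> rcases j with (j | j) | j <;>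
      simp [e, Matrix.one_apply]

theorem isLin_of_UEq {F : Type} [Field F] {m : ℕ} {ι κ ρ : Type*} [Fintype ι] [DecidableEq ι]
    [Fintype ρ] [DecidableEq ρ] [Fintype κ] [DecidableEq κ] {S : Matrix ι ι (Polynomial F)}
    {P : Matrix ρ ρ (Polynomial F)} (h : UEq S (fromBlocks (1 : Matrix κ κ (Polynomial F)) 0 0 P))
    (hm : Fintype.card κ = m) (hc : Fintype.card ι = Fintype.card κ + Fintype.card ρ) :
    IsLinearization m S P := by
  obtain ⟨U, U', V, V', hU, hV, h⟩ := h
  let e1 : Fin m ≃ κ := (Fintype.equivFinOfCardEq hm).symm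
  let e2 : κ ⊕ ρ ≃ ι := Fintype.equivOfCardEq (by simp [hc])
  refine ⟨(Equiv.sumCongr e1 (Equiv.refl ρ)).trans e2, U.submatrix e2.symm id,
    V.submatrix id e2.symm, ?_, ?_, ?_⟩
  · apply Matrix.isUnit_det_of_right_inverse (B := U'.submatrix id e2.symm)
    rw [sub_mul_sub, hU]
    simp
  · apply Matrix.isUnit_det_of_left_inverse (B := V'.submatrix e2.symm id)
    rw [sub_mul_sub, hV]
    simp
  · have : U.submatrix e2.symm id * S * V.submatrix id e2.symm
        = (U * S * V).submatrix e2.symm e2.symm := by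
      ext i j; simp [Matrix.mul_apply]
    rw [this, h]
    ext i j
    obtain ⟨i, rfl⟩ := e2.surjective i
    obtain ⟨j, rfl⟩ := e2.surjective j
    rcases i with i | i <;> rcases j with j | j <;> simp [Matrix.one_apply]

theorem kron_reduce {m c q : Type*} [Fintype m] [DecidableEq m] [Fintype c] [DecidableEq c]
    [Fintype q] [DecidableEq q] (s s' : R) (hs : s * s' = 1)
    (M : Matrix m m R) (K : Matrix c m R) (G : Matrix m c R) (N : Matrix m q R) (H : Matrix q m R)
    (hKG : K * G = 1) (hKN : K * N = 0) (hHG : H * G = 0) (hHN : H * N = 1) :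
    UEq (fromBlocks M Kᵀ (s • K) 0)
      (fromBlocks (1 : Matrix (c ⊕ c) (c ⊕ c) R) 0 0 (Nᵀ * M * N)) := by
  have hs' : s' * s = 1 := by rw [mul_comm, hs]
  have hss : ∀ r, s * (s' * r) = r := fun r => by rw [← mul_assoc, hs, one_mul]
  have hss' : ∀ r, s' * (s * r) = r := fun r => by rw [← mul_assoc, hs', one_mul]
  have tKG : Gᵀ * Kᵀ = 1 := by rw [← transpose_mul, hKG, transpose_one]
  have tKN : Nᵀ * Kᵀ = 0 := by rw [← transpose_mul, hKN, transpose_zero]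
  have tHG : Gᵀ * Hᵀ = 0 := by rw [← transpose_mul, hHG, transpose_zero]
  have tHN : Nᵀ * Hᵀ = 1 := by rw [← transpose_mul, hHN, transpose_one]
  set z : Matrix c c R := -(s' • (Gᵀ * M * G)) with hz
  set w : Matrix q c R := -(s' • (Nᵀ * M * G)) with hw
  set y : Matrix c q R := -(Gᵀ * M * N) with hy
  have f1 : (1 : Matrix (c ⊕ c) (c ⊕ c) R) = fromRows (fromCols 1 0) (fromCols 0 1) := by
    rw [← fromBlocks_one]; ext (i | i) (j | j) <;> simp
  refine ⟨fromBlocks (fromRows 0 Gᵀ) (fromRows 1 z) Nᵀ w,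
    fromBlocks (fromCols (-(Kᵀ * z + Hᵀ * w)) Kᵀ) Hᵀ (fromCols 1 0) 0,
    fromBlocks (fromCols (s' • G) 0) N (fromCols 0 1) y,
    fromBlocks (fromRows (s • K) (-(y * H))) (fromRows 0 1) H 0, ?_, ?_, ?_⟩
  · rw [fromBlocks_multiply, ← fromBlocks_one]
    congr 1
    · rw [fromRows_mul, fromRows_mul, f1]
      ext (i | i) (j | j) <;>
      simp [mul_fromCols, Matrix.mul_add, ← Matrix.mul_assoc, tKG, tHG]
    · ext (i | i) j <;> simp [fromRows_mul, tHG]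
    · ext i (j | j) <;> simp [mul_fromCols, Matrix.mul_add, ← Matrix.mul_assoc, tKN, tHN]
    · simp [tHN]
  · rw [fromBlocks_multiply, ← fromBlocks_one]
    congr 1
    · rw [fromRows_mul, fromRows_mul, f1]
      ext (i | i) (j | j) <;>
      simp [mul_fromCols, Matrix.mul_assoc, smul_smul, hs, hss, hss', hs', hKG, hHG]
    · ext (i | i) j <;> simp [fromRows_mul, Matrix.mul_assoc, hKN, hHN]
    · ext i (j | j) <;> simp [mul_fromCols, hHG]
    · simp [hHN]
  · rw [fromBlocks_multiply, fromBlocks_multiply]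
    congr 1
    · rw [f1]
      ext (i | i) (j | j) <;>
      simp [fromRows_mul, mul_fromCols, Matrix.add_mul, smul_smul, hs, hss, hss', hs', Matrix.mul_assoc, hKG, tKG, hz]
    · ext (i | i) j <;> simp [fromRows_mul, Matrix.add_mul, Matrix.mul_assoc, hKN, tKG, hy]
    · ext i (j | j) <;> simp [mul_fromCols, Matrix.add_mul, Matrix.mul_assoc, smul_smul, hs, hss, hss', hs', hKG, tKN, hw]
    · simp [Matrix.add_mul, Matrix.mul_assoc, hKN, tKN, ← Matrix.mul_assoc Nᵀ Kᵀ]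

theorem two_fwd {a : Type*} [Fintype a] [DecidableEq a] (x : R) (D D' Q : Matrix a a R)
    (h : D * D' = 1) :
    UEq (fromBlocks (-D) (x • D) (x • D) Q)
      (fromBlocks (1 : Matrix a a R) 0 0 (Q + (x * x) • D)) := by
  have h' : D' * D = 1 := mul_eq_one_comm.mp h
  refine ⟨fromBlocks (-D') 0 (x • 1) 1, fromBlocks (-D) 0 (x • D) 1,
    fromBlocks 1 (x • 1) 0 1, fromBlocks 1 (-(x • 1)) 0 1, ?_, ?_, ?_⟩
  · simp [fromBlocks_multiply, h']
  · simp [fromBlocks_multiply]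
  · simp [fromBlocks_multiply, h', smul_smul, add_comm]

theorem two_rev {a : Type*} [Fintype a] [DecidableEq a] (x : R) (D D' Q : Matrix a a R)
    (h : D * D' = 1) :
    UEq (fromBlocks (-(x • D)) D D Q)
      (fromBlocks (1 : Matrix a a R) 0 0 (x • Q + D)) := by
  have h' : D' * D = 1 := mul_eq_one_comm.mp h
  refine ⟨fromBlocks D' 0 (-(Q * D')) 1, fromBlocks D 0 Q 1,
    fromBlocks 0 1 1 (x • 1), fromBlocks (-(x • 1)) 1 1 0, ?_, ?_, ?_⟩
  · simp [fromBlocks_multiply, h', Matrix.mul_assoc]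
  · simp [fromBlocks_multiply]
  · simp [fromBlocks_multiply, h', Matrix.mul_assoc]

/-- Reduction of the modified pencil shape to a `2 × 2` block matrix. -/
theorem mod_reduce {a b c : Type*} [Fintype a] [DecidableEq a] [Fintype b] [DecidableEq b]
    [Fintype c] [DecidableEq c] (s s' : R) (hs : s * s' = 1)
    (M : Matrix (a ⊕ b) (a ⊕ b) R) (K : Matrix c b R) (G : Matrix b c R) (N : Matrix b a R)
    (H : Matrix a b R)
    (hKG : K * G = 1) (hKN : K * N = 0) (hHG : H * G = 0) (hHN : H * N = 1) :
    UEq (fromBlocks M (fromCols (0 : Matrix c a R) K)ᵀ (s • fromCols (0 : Matrix c a R) K) 0)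
      (fromBlocks (1 : Matrix (c ⊕ c) (c ⊕ c) R) 0 0
        (fromBlocks M.toBlocks₁₁ (M.toBlocks₁₂ * N) (Nᵀ * M.toBlocks₂₁)
          (Nᵀ * M.toBlocks₂₂ * N))) := by
  have key := kron_reduce s s' hs M (fromCols (0 : Matrix c a R) K) (fromRows 0 G)
    (fromBlocks (1 : Matrix a a R) 0 0 N) (fromBlocks (1 : Matrix a a R) 0 0 H)
    (by simp [fromCols_mul_fromRows, hKG])
    (by ext i (j | j) <;> simp [fromCols_mul_fromBlocks, hKN])
    (by ext (i | i) j <;> simp [fromBlocks_mul_fromRows, hHG])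
    (by simp [fromBlocks_multiply, hHN])
  convert key using 2
  conv_rhs => rw [← fromBlocks_toBlocks M]
  simp [fromBlocks_multiply, fromBlocks_transpose]

end helpers


section concrete

variable {F : Type} [Field F]

/-- Two-parameter bidiagonal matrix. -/
def Lp {R : Type*} [CommRing R] (x y : R) (s : ℕ) : Matrix (Fin s) (Fin (s+1)) R :=
  Matrix.of fun i j => if (j : ℕ) = (i : ℕ) then x else if (j : ℕ) = (i : ℕ) + 1 then y else 0

theorem Lp_mul {R : Type*} [CommRing R] (x y : R) (s n : ℕ) {κ : Type*}
    (N : Matrix (Fin (s+1) × Fin n) κ R) (i : Fin s) (r : Fin n) (k : κ) :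
    ((Lp x y s ⊗ₖ (1 : Matrix (Fin n) (Fin n) R)) * N) (i, r) k =
      x * N (i.castSucc, r) k + y * N (i.succ, r) k := by
  have h : ∀ j : Fin (s+1), Lp x y s i j =
      (if j = i.castSucc then x else 0) + (if j = i.succ then y else 0) := by
    intro j
    simp only [Lp, Matrix.of_apply, Fin.ext_iff, Fin.val_castSucc, Fin.val_succ]
    split_ifs <;> first | omega | simp
  simp [Matrix.mul_apply, Fintype.sum_prod_type, kroneckerMap_apply, Matrix.one_apply, h,
    add_mul, Finset.sum_add_distrib]

/-- Block row selecting block `i`. -/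
def selB (R : Type*) [CommRing R] (s n : ℕ) (i : Fin (s+1)) :
    Matrix (Fin n) (Fin (s+1) × Fin n) R :=
  Matrix.of fun c p => if p = (i, c) then 1 else 0

theorem selB_mul {R : Type*} [CommRing R] (s n : ℕ) (i : Fin (s+1)) {κ : Type*}
    (N : Matrix (Fin (s+1) × Fin n) κ R) (c : Fin n) (k : κ) :
    (selB R s n i * N) c k = N (i, c) k := by
  simp [selB, Matrix.mul_apply]

theorem fwd_dual (u n : ℕ) : ∃ (G : Matrix (Fin (u+1) × Fin n) (Fin u × Fin n) (Polynomial F))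
    (H : Matrix (Fin n) (Fin (u+1) × Fin n) (Polynomial F)),
    ((Lp (-1) X u : Matrix _ _ (Polynomial F)) ⊗ₖ (1 : Matrix (Fin n) (Fin n) (Polynomial F))) * G = 1 ∧ ((Lp (-1) X u : Matrix _ _ (Polynomial F)) ⊗ₖ (1 : Matrix (Fin n) (Fin n) (Polynomial F))) * Lam F u n = 0 ∧ H * G = 0 ∧
      H * Lam F u n = 1 := by
  refine ⟨Matrix.of fun p q => if (p.1 : ℕ) ≤ (q.1 : ℕ) ∧ p.2 = q.2 then
    -X ^ ((q.1 : ℕ) - (p.1 : ℕ)) else 0, selB _ u n (Fin.last u), ?_, ?_, ?_, ?_⟩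
  · ext1 ⟨i, r⟩ ⟨j, c⟩
    rw [Lp_mul]
    simp only [Matrix.of_apply, Matrix.one_apply, Fin.val_castSucc, Fin.val_succ, Prod.mk.injEq,
      Fin.ext_iff]
    by_cases hrc : (r : ℕ) = c
    · rcases lt_trichotomy (i : ℕ) j with h | h | h
      · have e : (j : ℕ) - i = (j - (i + 1)) + 1 := by omega
        rw [if_pos ⟨by omega, hrc⟩, if_pos ⟨by omega, hrc⟩, if_neg (by omega), e, pow_succ]
        ring
      · rw [if_pos ⟨by omega, hrc⟩, if_neg (by omega), if_pos ⟨h, hrc⟩, h]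
        simp
      · rw [if_neg (by omega), if_neg (by omega), if_neg (by omega)]
        simp
    · simp [hrc]
  · ext1 ⟨i, r⟩ c
    rw [Lp_mul]
    simp only [Lam, Matrix.of_apply, Fin.val_castSucc, Fin.val_succ, Matrix.zero_apply]
    have e : u - (i : ℕ) = (u - (i + 1)) + 1 := by omega
    split_ifs
    · rw [e, pow_succ]; ring
    · simp
  · ext1 r ⟨j, c⟩
    rw [selB_mul]
    simp
  · ext1 r c
    rw [selB_mul]
    simp [Lam, Matrix.one_apply]

theorem rev_dual (u n : ℕ) : ∃ (G : Matrix (Fin (u+1) × Fin n) (Fin u × Fin n) (Polynomial F))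
    (H : Matrix (Fin n) (Fin (u+1) × Fin n) (Polynomial F)),
    ((Lp (-X) 1 u : Matrix _ _ (Polynomial F)) ⊗ₖ (1 : Matrix (Fin n) (Fin n) (Polynomial F))) * G = 1 ∧ ((Lp (-X) 1 u : Matrix _ _ (Polynomial F)) ⊗ₖ (1 : Matrix (Fin n) (Fin n) (Polynomial F))) * revMat u (Lam F u n) = 0 ∧ H * G = 0 ∧
      H * revMat u (Lam F u n) = 1 := by
  have hL : revMat u (Lam F u n) = Matrix.of fun p c => if p.2 = c then X ^ (p.1 : ℕ) else 0 := by
    ext1 ⟨i, r⟩ c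
    simp only [revMat, Lam, Matrix.map_apply, Matrix.of_apply]
    split_ifs
    · rw [reflect_monomial, revAt_le (by omega)]
      congr 1; omega
    · simp
  rw [hL]
  refine ⟨Matrix.of fun p q => if (q.1 : ℕ) + 1 ≤ (p.1 : ℕ) ∧ p.2 = q.2 then
    X ^ ((p.1 : ℕ) - ((q.1 : ℕ) + 1)) else 0, selB _ u n 0, ?_, ?_, ?_, ?_⟩
  · ext1 ⟨i, r⟩ ⟨j, c⟩
    rw [Lp_mul]
    simp only [Matrix.of_apply, Matrix.one_apply, Fin.val_castSucc, Fin.val_succ, Prod.mk.injEq,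
      Fin.ext_iff]
    by_cases hrc : (r : ℕ) = c
    · rcases lt_trichotomy (i : ℕ) j with h | h | h
      · rw [if_neg (by omega), if_neg (by omega), if_neg (by omega)]
        simp
      · rw [if_neg (by omega), if_pos ⟨by omega, hrc⟩, if_pos ⟨h, hrc⟩, h]
        simp
      · have e : (i : ℕ) + 1 - (j + 1) = (i - (j + 1)) + 1 := by omega
        rw [if_pos ⟨by omega, hrc⟩, if_pos ⟨by omega, hrc⟩, if_neg (by omega), e, pow_succ]
        ring
    · simp [hrc]
  · ext1 ⟨i, r⟩ c
    rw [Lp_mul]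
    simp only [Matrix.of_apply, Fin.val_castSucc, Fin.val_succ, Matrix.zero_apply]
    split_ifs
    · rw [pow_succ]; ring
    · simp
  · ext1 r ⟨j, c⟩
    rw [selB_mul]
    simp
  · ext1 r c
    rw [selB_mul]
    simp [Matrix.one_apply]

theorem reflect_sum' {ι : Type*} (s : Finset ι) (f : ι → Polynomial F) (N : ℕ) :
    (∑ i ∈ s, f i).reflect N = ∑ i ∈ s, (f i).reflect N := by
  classical
  induction s using Finset.induction_on with
  | empty => simp
  | insert a s ha ih => rw [Finset.sum_insert ha, Finset.sum_insert ha, reflect_add, ih]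

theorem revMat_mul {α β γ : Type*} [Fintype β] (f g : ℕ) (S : Matrix α β (Polynomial F))
    (T : Matrix β γ (Polynomial F)) (hS : ∀ i j, (S i j).natDegree ≤ f)
    (hT : ∀ i j, (T i j).natDegree ≤ g) :
    revMat (f + g) (S * T) = revMat f S * revMat g T := by
  ext1 i j
  simp only [revMat, Matrix.map_apply, Matrix.mul_apply, reflect_sum']
  exact Finset.sum_congr rfl fun k _ => reflect_mul _ _ (hS _ _) (hT _ _)

theorem mul_deg {α β γ : Type*} [Fintype β] (f g : ℕ) (S : Matrix α β (Polynomial F))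
    (T : Matrix β γ (Polynomial F)) (hS : ∀ i j, (S i j).natDegree ≤ f)
    (hT : ∀ i j, (T i j).natDegree ≤ g) (i : α) (j : γ) : ((S * T) i j).natDegree ≤ f + g := by
  rw [Matrix.mul_apply]
  exact natDegree_sum_le_of_forall_le _ _ fun k _ => natDegree_mul_le_of_le (hS _ _) (hT _ _)

theorem pencil_deg {α β : Type*} (A B : Matrix α β F) (i : α) (j : β) :
    (pencil A B i j).natDegree ≤ 1 := by
  simp only [pencil, matC, Matrix.add_apply, Matrix.smul_apply, Matrix.map_apply, smul_eq_mul]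
  compute_degree

theorem Lam_deg (u n : ℕ) (p : Fin (u+1) × Fin n) (c : Fin n) :
    (Lam F u n p c).natDegree ≤ u := by
  simp only [Lam, Matrix.of_apply]
  split_ifs
  · rw [natDegree_X_pow]; omega
  · simp

theorem sum_deg {n : ℕ} (d : ℕ) (Pc : ℕ → Matrix (Fin n) (Fin n) F) (i j : Fin n) :
    ((∑ k ∈ Finset.range (d+1), (X : Polynomial F) ^ k • matC (Pc k)) i j).natDegree ≤ d := by
  rw [Matrix.sum_apply]
  refine natDegree_sum_le_of_forall_le _ _ fun k hk => ?_
  have : k ≤ d := by simpa [Nat.lt_succ_iff] using hk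
  simp only [matC, Matrix.smul_apply, Matrix.map_apply, smul_eq_mul]
  refine (natDegree_mul_le_of_le (natDegree_X_pow_le k) (natDegree_C _).le).trans (by omega)

theorem modBK_eq (u n : ℕ) (σ : F)
    (M : Matrix (Fin n ⊕ Fin (u+1) × Fin n) (Fin n ⊕ Fin (u+1) × Fin n) (Polynomial F)) :
    modBK F u n σ M = fromBlocks M (fromCols 0 (Lp (-1) X u ⊗ₖ 1))ᵀ
      ((C σ : Polynomial F) • fromCols 0 (Lp (-1) X u ⊗ₖ 1)) 0 := by
  have h : LhatB F u n = fromCols 0 (Lp (-1) X u ⊗ₖ 1) := by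
    ext1 i (j | j) <;> simp [LhatB, Lp, Lpen]
  rw [modBK, h]
  congr 1
  ext1 i j
  simp [Polynomial.smul_eq_C_mul]

theorem rev_modBK_eq (u n : ℕ) (σ : F)
    (M : Matrix (Fin n ⊕ Fin (u+1) × Fin n) (Fin n ⊕ Fin (u+1) × Fin n) (Polynomial F)) :
    revMat 1 (modBK F u n σ M) = fromBlocks (revMat 1 M) (fromCols 0 (Lp (-X) 1 u ⊗ₖ 1))ᵀ
      ((C σ : Polynomial F) • fromCols 0 (Lp (-X) 1 u ⊗ₖ 1)) 0 := by
  have hneg : (-1 : Polynomial F).reflect 1 = -X := by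
    have := reflect_C (-1 : F) 1
    rw [C_neg, C_1] at this
    rw [this]; ring
  have key : ∀ (i : Fin u) (r : Fin n) (j : Fin (u+1)) (c : Fin n),
      (Lp (-1 : Polynomial F) X u i j * (1 : Matrix (Fin n) (Fin n) (Polynomial F)) r c).reflect 1 =
      Lp (-X : Polynomial F) 1 u i j * (1 : Matrix (Fin n) (Fin n) (Polynomial F)) r c := by
    intro i r j c
    simp only [Lp, Matrix.of_apply, Matrix.one_apply]
    split_ifs <;> simp [hneg]
  rw [modBK_eq]
  ext1 (( i | ⟨i, r⟩) | ⟨i, r⟩) ((j | ⟨j, c⟩) | ⟨j, c⟩) <;>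
    simp [revMat, kroneckerMap_apply, key, reflect_C_mul]

theorem matC_inv {n : ℕ} (D : Matrix (Fin n) (Fin n) F) (h : IsUnit D.det) :
    matC D * matC D⁻¹ = 1 := by
  have : matC (D * D⁻¹) = matC D * matC D⁻¹ := Matrix.map_mul (f := (C : F →+* Polynomial F))
  rw [← this, Matrix.mul_nonsing_inv _ h]
  exact Matrix.map_one _ (map_zero C) (map_one C)

end concrete

/-- (`t = u+1 ≥ 2`, `d = 2t`.) If the blocks of the pencil `λB+A` satisfy
`M₁₁ = -P_d`, `M₁₂(λ)(Λ_{t-1}(λ)⊗I_n) = λ^t P_d`, `(Λ_{t-1}(λ)ᵀ⊗I_n)M₂₁(λ) = λ^t P_d`, and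
`(Λ_{t-1}(λ)ᵀ⊗I_n)M₂₂(λ)(Λ_{t-1}(λ)⊗I_n) = Q(λ)`, with `P_d` invertible, then for each
`σ ∈ {1,-1}` the modified block Kronecker pencil is a strong linearization of `P` of
grade `d`. -/
theorem stmt_11 {F : Type} [Field F] (n u : ℕ) (hn : 0 < n) (hu : 1 ≤ u)
    (Pc : ℕ → Matrix (Fin n) (Fin n) F)
    (hPd : IsUnit (Pc (2*(u+1))).det)
    (σ : F) (hσ : σ = 1 ∨ σ = -1)
    (A B : Matrix (Fin n ⊕ Fin (u+1) × Fin n) (Fin n ⊕ Fin (u+1) × Fin n) F)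
    (h11 : (pencil A B).toBlocks₁₁ = -(matC (Pc (2*(u+1)))))
    (h12 : (pencil A B).toBlocks₁₂ * Lam F u n =
      (X : Polynomial F) ^ (u+1) • matC (Pc (2*(u+1))))
    (h21 : (Lam F u n)ᵀ * (pencil A B).toBlocks₂₁ =
      (X : Polynomial F) ^ (u+1) • matC (Pc (2*(u+1))))
    (h22 : (Lam F u n)ᵀ * (pencil A B).toBlocks₂₂ * Lam F u n =
      ∑ k ∈ Finset.range (2*(u+1)), (X : Polynomial F) ^ k • matC (Pc k)) :
    IsLinearization ((2*(u+1) - 1)*n) (modBK F u n σ (pencil A B))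
        (polyOfCoeffs (2*(u+1)) Pc) ∧
      IsLinearization ((2*(u+1) - 1)*n) (revMat 1 (modBK F u n σ (pencil A B)))
        (revMat (2*(u+1)) (polyOfCoeffs (2*(u+1)) Pc)) := by
  have hσσ : (C σ : Polynomial F) * C σ = 1 := by
    rcases hσ with rfl | rfl <;> simp
  have hD := matC_inv _ hPd
  set D := matC (Pc (2*(u+1))) with hDdef
  have hcard : Fintype.card ((Fin u × Fin n ⊕ Fin u × Fin n) ⊕ Fin n) = (2*(u+1) - 1)*n := by
    have e : 2*(u+1) - 1 = u + u + 1 := by omega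
    simp only [Fintype.card_sum, Fintype.card_prod, Fintype.card_fin, e]; ring
  have hcard2 : Fintype.card ((Fin n ⊕ Fin (u+1) × Fin n) ⊕ Fin u × Fin n) =
      Fintype.card ((Fin u × Fin n ⊕ Fin u × Fin n) ⊕ Fin n) + Fintype.card (Fin n) := by
    simp only [Fintype.card_sum, Fintype.card_prod, Fintype.card_fin]; ring
  have hP : polyOfCoeffs (2*(u+1)) Pc =
      (∑ k ∈ Finset.range (2*(u+1)), (X : Polynomial F) ^ k • matC (Pc k)) +
        (X ^ (u+1) * X ^ (u+1) : Polynomial F) • D := by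
    rw [polyOfCoeffs, Finset.sum_range_succ, ← pow_add, ← two_mul]
  have hd := pencil_deg A B
  have hLd := Lam_deg (F := F) u n
  have d12 : ∀ i j, ((pencil A B).toBlocks₁₂ i j).natDegree ≤ 1 := fun i j => hd _ _
  have d21 : ∀ i j, ((pencil A B).toBlocks₂₁ i j).natDegree ≤ 1 := fun i j => hd _ _
  have d22 : ∀ i j, ((pencil A B).toBlocks₂₂ i j).natDegree ≤ 1 := fun i j => hd _ _
  constructor
  · obtain ⟨G, H, k1, k2, k3, k4⟩ := fwd_dual (F := F) u n
    have r := mod_reduce (C σ) (C σ) hσσ (pencil A B) _ G _ H k1 k2 k3 k4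
    rw [h11, h12, h21, h22, ← modBK_eq] at r
    have r2 := (r.trans (two_fwd _ D _ _ hD).diag).trans (UEq.assoc _)
    rw [← hP] at r2
    exact isLin_of_UEq r2 hcard hcard2
  · obtain ⟨G, H, k1, k2, k3, k4⟩ := rev_dual (F := F) u n
    have r := mod_reduce (C σ) (C σ) hσσ (revMat 1 (pencil A B)) _ G _ H k1 k2 k3 k4
    have hrev : ∀ N : ℕ, revMat N ((X : Polynomial F) ^ N • D) = D := by
      intro N
      ext1 i j
      simp only [revMat, hDdef, matC, Matrix.map_apply, Matrix.smul_apply, smul_eq_mul]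
      rw [mul_comm, reflect_C_mul_X_pow, revAt_le le_rfl]
      simp
    have g11 : (revMat 1 (pencil A B)).toBlocks₁₁ = -((X : Polynomial F) • D) := by
      change revMat 1 (pencil A B).toBlocks₁₁ = _
      rw [h11]
      ext1 i j
      simp only [revMat, hDdef, matC, Matrix.map_apply, Matrix.smul_apply, smul_eq_mul,
        Matrix.neg_apply]
      rw [← C_neg, reflect_C, C_neg]
      ring
    have g12 : (revMat 1 (pencil A B)).toBlocks₁₂ * revMat u (Lam F u n) = D := by
      change revMat 1 (pencil A B).toBlocks₁₂ * revMat u (Lam F u n) = D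
      rw [← revMat_mul _ _ _ _ d12 hLd, h12, add_comm 1 u]
      exact hrev _
    have hLd' : ∀ i j, ((Lam F u n)ᵀ i j).natDegree ≤ u := fun i j => hLd j i
    have g21 : (revMat u (Lam F u n))ᵀ * (revMat 1 (pencil A B)).toBlocks₂₁ = D := by
      change revMat u (Lam F u n)ᵀ * revMat 1 (pencil A B).toBlocks₂₁ = _
      rw [← revMat_mul _ _ _ _ hLd' d21, h21]
      exact hrev _
    have g22 : (revMat u (Lam F u n))ᵀ * (revMat 1 (pencil A B)).toBlocks₂₂ *
        revMat u (Lam F u n) = revMat (u + 1 + u)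
          (∑ k ∈ Finset.range (2*(u+1)), (X : Polynomial F) ^ k • matC (Pc k)) := by
      change revMat u (Lam F u n)ᵀ * revMat 1 (pencil A B).toBlocks₂₂ * _ = _
      rw [← revMat_mul _ _ _ _ hLd' d22, ← revMat_mul _ _ _ _ ?_ hLd, h22]
      exact mul_deg _ _ _ _ hLd' d22
    have e : 2*(u+1) = (u + 1 + u) + 1 := by ring
    have gP : revMat (2*(u+1)) (polyOfCoeffs (2*(u+1)) Pc) =
        (X : Polynomial F) • revMat (u + 1 + u)
          (∑ k ∈ Finset.range (2*(u+1)), (X : Polynomial F) ^ k • matC (Pc k)) + D := by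
      have e1 := hrev (2*(u+1))
      have e2 : (X ^ (u+1) * X ^ (u+1) : Polynomial F) = X ^ (2*(u+1)) := by
        rw [← pow_add, ← two_mul]
      rw [hP, e2]
      ext1 i j
      have e3 := congrFun (congrFun e1 i) j
      have hq := sum_deg (u + 1 + u) Pc i j
      rw [← e] at hq
      simp only [revMat, Matrix.map_apply, Matrix.add_apply, Matrix.smul_apply, reflect_add]
        at e3 ⊢
      rw [e3]
      congr 1
      have e4 := reflect_mul _ (1 : Polynomial F) (F := u + 1 + u) (G := 1) hq (by simp)
      rw [mul_one, ← e, reflect_one, pow_one] at e4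
      rw [e4, smul_eq_mul, mul_comm]
    rw [g11, g12, g21, g22, ← rev_modBK_eq] at r
    have r2 := (r.trans (two_rev _ D _ _ hD).diag).trans (UEq.assoc _)
    rw [← gP] at r2
    exact isLin_of_UEq r2 hcard hcard2
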